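/- Let p be a prime. The additive map d : ∏_{n ≥ 1} LocallyConstant V_n (ZMod p) → ∏_{n ≥ 1} LocallyConstant V_n (ZMod p) defined by d(b)_n = b_n − (restriction of b_{n+1} to V_n) is not surjective. (Equivalently, lim¹ of the tower (LocallyConstant V_n (ZMod p)) with restriction maps is nonzero.) -/

import Mathlib

open Real Set

/-- The deleted topologist's sine curve `T`. -/
def T : Set (ℝ × ℝ) :=
  {p : ℝ × ℝ | (0 < p.1 ∧ p.1 ≤ 1 ∧ p.2 = Real.sin (1 / p.1)) ∨
    (p.1 = 0 ∧ -1 ≤ p.2 ∧ p.2 < 0)}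

def r : ℝ × ℝ := (0, -1)

noncomputable def s : ℝ × ℝ := (1, Real.sin 1)

def V : Set (ℝ × ℝ) := T ∩ {p : ℝ × ℝ | p.2 < 0}

def Vi (i : ℕ) : Set (ℝ × ℝ) := V ∪ (T ∩ {p : ℝ × ℝ | p.1 > 1 / (i : ℝ)})

lemma r_mem_T : r ∈ T := Or.inr ⟨rfl, le_refl _, by norm_num [r]⟩

lemma r_mem_Vi (i : ℕ) : r ∈ Vi i := Or.inl ⟨r_mem_T, by norm_num [r]⟩

lemma s_mem_T : s ∈ T := Or.inl ⟨one_pos, le_refl _, by norm_num [s]⟩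

lemma s_mem_Vi {i : ℕ} (hi : 2 ≤ i) : s ∈ Vi i := by
  refine Or.inr ⟨s_mem_T, ?_⟩
  have h2 : (1 : ℝ) < i := by exact_mod_cast lt_of_lt_of_le one_lt_two (by exact_mod_cast hi)
  show (1 : ℝ) / (i : ℝ) < s.1
  rw [show s.1 = 1 from rfl, div_lt_one (by linarith)]
  exact h2

lemma Vi_mono {i j : ℕ} (hi : 1 ≤ i) (hij : i ≤ j) : Vi i ⊆ Vi j := by
  apply Set.union_subset_union_right
  apply Set.inter_subset_inter_right
  intro p hp
  have hi' : (0 : ℝ) < i := by exact_mod_cast hi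
  have hij' : (i : ℝ) ≤ j := by exact_mod_cast hij
  exact lt_of_le_of_lt (one_div_le_one_div_of_le hi' hij') hp

/-- Restriction of locally constant functions along the inclusion `Vi i ⊆ Vi j`,
as an additive group homomorphism. -/
noncomputable def resHom (p : ℕ) {i j : ℕ} (h : Vi i ⊆ Vi j) :
    LocallyConstant (Vi j) (ZMod p) →+ LocallyConstant (Vi i) (ZMod p) :=
  LocallyConstant.comapAddMonoidHom ⟨Set.inclusion h, continuous_inclusion h⟩

/-!
Let `x j = (1 / u j, -1)` be the successive troughs of the sine curve. They lie in every `Vi n` and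
converge to `r`, so a locally constant function on `Vi 1` is eventually constant along them.
Consecutive troughs lie in one component of `Vi n` as soon as `n` is large, yet `Vi (n + 1)` can be
cut into two clopen pieces between the troughs `n` and `n + 1`. Let `c n` be a nonzero constant `a`
on the piece close to the `y`-axis and `0` on the other one. If `d b = c`, telescoping
`b n - b (n + 1) = c n` shows that `b 0` jumps by `a` between any two consecutive troughs, which is
absurd.
-/

open Filter Topology

section Tower

variable {X : ℕ → Type*} [∀ n, TopologicalSpace (X n)] {A : Type*} [AddCommGroup A]
  {ι : ∀ n, C(X n, X (n + 1))}

lemma apply_zero_sub_apply_eq_sum {b c : ∀ n, LocallyConstant (X n) A}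
    (hb : ∀ n, b n - (b (n + 1)).comap (ι n) = c n)
    {x : ∀ n, X n} (hx : ∀ n, ι n (x n) = x (n + 1)) (N : ℕ) :
    b 0 (x 0) - b N (x N) = ∑ n ∈ Finset.range N, c n (x n) := by
  rw [← Finset.sum_range_sub' fun n => b n (x n)]
  refine Finset.sum_congr rfl fun n _ => ?_
  rw [← hb n, LocallyConstant.sub_apply, LocallyConstant.coe_comap_apply, hx n]

lemma apply_succ_sub_apply_eq_of_sub_comap_eq_indicator
    {U : ∀ n, Set (X n)} (hU : ∀ n, IsClopen (U n)) {a : A} {b : ∀ n, LocallyConstant (X n) A}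
    (hb : ∀ n, b n - (b (n + 1)).comap (ι n) = (LocallyConstant.const (X n) a).indicator (hU n))
    {x : ∀ n, ℕ → X n} (hx : ∀ n j, ι n (x n j) = x (n + 1) j)
    (hxU : ∀ n j, x n j ∈ U n ↔ n < j) {j N : ℕ} (hjN : j < N)
    (hconn : x N (j + 1) ∈ connectedComponent (x N j)) :
    b 0 (x 0 (j + 1)) - b 0 (x 0 j) = a := by
  have hbN : b N (x N (j + 1)) = b N (x N j) :=
    (b N).isLocallyConstant.apply_eq_of_isPreconnected isPreconnected_connectedComponent
      hconn mem_connectedComponent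
  have hjump (n : ℕ) :
      (LocallyConstant.const (X n) a).indicator (hU n) (x n (j + 1)) -
        (LocallyConstant.const (X n) a).indicator (hU n) (x n j) = if n = j then a else 0 := by
    classical
    simp only [LocallyConstant.indicator_apply, Set.indicator_apply, hxU, LocallyConstant.coe_const,
      Function.const_apply]
    split_ifs <;> first | omega | simp
  calc b 0 (x 0 (j + 1)) - b 0 (x 0 j)
      = (b 0 (x 0 (j + 1)) - b N (x N (j + 1))) - (b 0 (x 0 j) - b N (x N j)) := by
        rw [hbN, sub_sub_sub_cancel_right]
    _ = ∑ n ∈ Finset.range N, if n = j then a else 0 := by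
        rw [apply_zero_sub_apply_eq_sum hb (fun n => hx n (j + 1)),
          apply_zero_sub_apply_eq_sum hb (fun n => hx n j), ← Finset.sum_sub_distrib]
        exact Finset.sum_congr rfl fun n _ => hjump n
    _ = a := by rw [Finset.sum_ite_eq', if_pos (Finset.mem_range.2 hjN)]

theorem not_surjective_sub_comap [Nontrivial A]
    {x : ∀ n, ℕ → X n} (hx : ∀ n j, ι n (x n j) = x (n + 1) j)
    {x₀ : X 0} (hlim : Tendsto (x 0) atTop (𝓝 x₀))
    (hconn : ∀ j, ∃ n > j, x n (j + 1) ∈ connectedComponent (x n j))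
    {U : ∀ n, Set (X n)} (hU : ∀ n, IsClopen (U n)) (hxU : ∀ n j, x n j ∈ U n ↔ n < j) :
    ¬ Function.Surjective
      (fun (b : ∀ n, LocallyConstant (X n) A) (n : ℕ) => b n - (b (n + 1)).comap (ι n)) := by
  intro hsurj
  obtain ⟨a, ha⟩ := exists_ne (0 : A)
  obtain ⟨b, hb⟩ := hsurj fun n => (LocallyConstant.const (X n) a).indicator (hU n)
  have heventually : ∀ᶠ j in atTop, b 0 (x 0 j) = b 0 x₀ :=
    hlim.eventually ((b 0).isLocallyConstant.eventually_eq x₀)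
  obtain ⟨j, hj, hj'⟩ := (heventually.and ((tendsto_add_atTop_nat 1).eventually heventually)).exists
  obtain ⟨N, hjN, hN⟩ := hconn j
  have hjump : b 0 (x 0 (j + 1)) - b 0 (x 0 j) = a :=
    apply_succ_sub_apply_eq_of_sub_comap_eq_indicator hU (congrFun hb) hx hxU hjN hN
  rw [hj, hj', sub_self] at hjump
  exact ha hjump.symm

end Tower

/-- The oscillating part of `T`, parametrised by `u = 1 / x`, so that it is traced out for `1 ≤ u`
and `Vi n` contains its part with `u < n`. -/
noncomputable def sineCurve (u : ℝ) : ℝ × ℝ := (1 / u, sin u)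

lemma continuousOn_sineCurve : ContinuousOn sineCurve {0}ᶜ :=
  (continuousOn_const.div continuousOn_id fun _ hu => hu).prodMk continuous_sin.continuousOn

lemma sineCurve_mem_T {u : ℝ} (hu : 1 ≤ u) : sineCurve u ∈ T := by
  have hu₀ : 0 < u := one_pos.trans_le hu
  exact Or.inl ⟨one_div_pos.2 hu₀, (div_le_one hu₀).2 hu, by simp only [sineCurve, one_div_one_div]⟩

lemma sineCurve_mem_Vi_of_sin_neg {u : ℝ} (hu : 1 ≤ u) (hsin : sin u < 0) (n : ℕ) :
    sineCurve u ∈ Vi n :=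
  Or.inl ⟨sineCurve_mem_T hu, hsin⟩

lemma sineCurve_mem_Vi_of_lt {u : ℝ} (hu : 1 ≤ u) {n : ℕ} (hn : u < n) : sineCurve u ∈ Vi n :=
  Or.inr ⟨sineCurve_mem_T hu, one_div_lt_one_div_of_lt (one_pos.trans_le hu) hn⟩

lemma sineCurve_mem_connectedComponentIn {n : ℕ} {u v : ℝ} (hu : u ∈ Ico 1 (n : ℝ))
    (hv : v ∈ Ico 1 (n : ℝ)) : sineCurve v ∈ connectedComponentIn (Vi n) (sineCurve u) := by
  have hcont : ContinuousOn sineCurve (Ico 1 n) :=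
    continuousOn_sineCurve.mono fun _ hw => (one_pos.trans_le hw.1).ne'
  have hsub : sineCurve '' Ico 1 n ⊆ Vi n :=
    image_subset_iff.2 fun _ hw => sineCurve_mem_Vi_of_lt hw.1 hw.2
  exact (isPreconnected_Ico.image _ hcont).subset_connectedComponentIn
    (mem_image_of_mem _ hu) hsub (mem_image_of_mem _ hv)

lemma fst_ne_one_div_of_mem_Vi {n : ℕ} (hn : 0 < n) {u : ℝ} (hnu : n ≤ u) (hsin : 0 ≤ sin u)
    {z : ℝ × ℝ} (hz : z ∈ Vi n) : z.1 ≠ 1 / u := by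
  have hn₀ : (0 : ℝ) < n := Nat.cast_pos.2 hn
  intro hzu
  rcases hz with ⟨⟨-, -, hcurve⟩ | ⟨hzero, -⟩, hneg⟩ | ⟨-, hright⟩
  · rw [hzu, one_div_one_div] at hcurve
    exact hsin.not_gt (hcurve ▸ hneg)
  · exact (one_div_pos.2 (hn₀.trans_le hnu)).ne' (hzu.symm.trans hzero)
  · exact (one_div_le_one_div_of_le hn₀ hnu).not_gt (hzu ▸ hright)

lemma isClopen_setOf_fst_lt_one_div {n : ℕ} (hn : 0 < n) {u : ℝ} (hnu : n ≤ u)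
    (hsin : 0 ≤ sin u) : IsClopen {z : Vi n | z.1.1 < 1 / u} := by
  have hfst : Continuous fun z : Vi n => z.1.1 := continuous_fst.comp continuous_subtype_val
  have hle : {z : Vi n | z.1.1 < 1 / u} = {z : Vi n | z.1.1 ≤ 1 / u} :=
    Set.ext fun z => (fst_ne_one_div_of_mem_Vi hn hnu hsin z.2).le_iff_lt.symm
  exact ⟨hle ▸ isClosed_le hfst continuous_const, isOpen_lt hfst continuous_const⟩

/-- The parameter on `sineCurve` of the `j`-th trough, where the sine takes the value `-1`. -/
noncomputable def troughParam (j : ℕ) : ℝ := 3 * π / 2 + j * (2 * π)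

lemma sin_troughParam (j : ℕ) : sin (troughParam j) = -1 := by
  rw [troughParam, sin_add_nat_mul_two_pi, show 3 * π / 2 = π / 2 + π by ring, sin_add_pi,
    sin_pi_div_two]

lemma add_one_le_troughParam (j : ℕ) : (j : ℝ) + 1 ≤ troughParam j := by
  rw [troughParam]
  nlinarith [pi_gt_three, (Nat.cast_nonneg j : (0 : ℝ) ≤ j)]

lemma one_le_troughParam (j : ℕ) : 1 ≤ troughParam j :=
  (le_add_of_nonneg_left j.cast_nonneg).trans (add_one_le_troughParam j)

lemma troughParam_lt_succ (j : ℕ) : troughParam j < troughParam (j + 1) := by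
  simp only [troughParam, Nat.cast_succ]
  linarith [pi_pos]

lemma succ_mul_two_pi_lt_troughParam_iff (n j : ℕ) :
    ((n + 1 : ℕ) : ℝ) * (2 * π) < troughParam j ↔ n < j := by
  rw [troughParam]
  refine ⟨fun h => ?_, fun h => ?_⟩
  · by_contra! hjn
    have hjn' : (j : ℝ) ≤ n := Nat.cast_le.2 hjn
    push_cast at h
    nlinarith [pi_pos]
  · have hnj : ((n + 1 : ℕ) : ℝ) ≤ j := Nat.cast_le.2 h
    nlinarith [pi_pos]

lemma sineCurve_troughParam_mem_Vi (j n : ℕ) : sineCurve (troughParam j) ∈ Vi n :=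
  sineCurve_mem_Vi_of_sin_neg (one_le_troughParam j) (sin_troughParam j ▸ neg_one_lt_zero) n

/-- The `j`-th trough of the sine curve, as a point of `Vi n`. -/
noncomputable def trough (n j : ℕ) : Vi n :=
  ⟨sineCurve (troughParam j), sineCurve_troughParam_mem_Vi j n⟩

lemma tendsto_trough (n : ℕ) : Tendsto (trough n) atTop (𝓝 ⟨r, r_mem_Vi n⟩) := by
  have hparam : Tendsto troughParam atTop atTop :=
    tendsto_atTop_mono (fun j => (lt_add_one _).le.trans (add_one_le_troughParam j))
      tendsto_natCast_atTop_atTop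
  rw [tendsto_subtype_rng]
  simp only [trough, sineCurve, sin_troughParam, one_div]
  exact hparam.inv_tendsto_atTop.prodMk_nhds tendsto_const_nhds

lemma trough_succ_mem_connectedComponent {n j : ℕ} (hn : troughParam (j + 1) < n) :
    trough n (j + 1) ∈ connectedComponent (trough n j) := by
  have hmem := sineCurve_mem_connectedComponentIn
    ⟨one_le_troughParam j, (troughParam_lt_succ j).trans hn⟩ ⟨one_le_troughParam (j + 1), hn⟩
  rw [connectedComponentIn_eq_image (sineCurve_troughParam_mem_Vi j n)] at hmem
  exact Subtype.val_injective.mem_set_image.1 hmem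

lemma exists_trough_succ_mem_connectedComponent (j : ℕ) :
    ∃ n > j, trough (n + 1) (j + 1) ∈ connectedComponent (trough (n + 1) j) := by
  obtain ⟨n, hn⟩ := exists_nat_gt (troughParam (j + 1))
  have hjn : (j : ℝ) < n := by
    linarith [add_one_le_troughParam j, troughParam_lt_succ j]
  have hn' : troughParam (j + 1) < (n + 1 : ℕ) := hn.trans (Nat.cast_lt.2 n.lt_succ_self)
  exact ⟨n, Nat.cast_lt.1 hjn, trough_succ_mem_connectedComponent hn'⟩

/-- The part of `Vi (n + 1)` near the `y`-axis. It is cut off at a zero of `sin (1 / x)` that lies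
between the troughs `n` and `n + 1`; the corresponding point of `T` is not in `Vi (n + 1)`. -/
def leftPart (n : ℕ) : Set (Vi (n + 1)) := {z | z.1.1 < 1 / (((n + 1 : ℕ) : ℝ) * (2 * π))}

lemma isClopen_leftPart (n : ℕ) : IsClopen (leftPart n) := by
  refine isClopen_setOf_fst_lt_one_div n.succ_pos ?_ ?_
  · exact le_mul_of_one_le_right (Nat.cast_nonneg _) (by linarith [pi_gt_three])
  · rw [← zero_add (((n + 1 : ℕ) : ℝ) * (2 * π)), sin_add_nat_mul_two_pi, sin_zero]

lemma trough_mem_leftPart_iff (n j : ℕ) : trough (n + 1) j ∈ leftPart n ↔ n < j := by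
  rw [← succ_mul_two_pi_lt_troughParam_iff]
  exact one_div_lt_one_div (one_pos.trans_le (one_le_troughParam j)) (by positivity)

theorem stmt_13_general (A : Type*) [AddCommGroup A] [Nontrivial A] :
    ¬ Function.Surjective
      (fun (b : ∀ n : ℕ, LocallyConstant (Vi (n + 1)) A) (n : ℕ) =>
        b n - (b (n + 1)).comap
          ⟨inclusion (Vi_mono n.succ_pos (n + 1).le_succ), continuous_inclusion _⟩) :=
  not_surjective_sub_comap (x := fun n => trough (n + 1)) (fun _ _ => rfl) (tendsto_trough 1)
    exists_trough_succ_mem_connectedComponent isClopen_leftPart trough_mem_leftPart_iff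

/-- For a prime `p`, the map `d` on `∏_{n ≥ 1} LocallyConstant (Vi n) (ZMod p)` given by
`d b n = b n - (restriction of b (n+1))` is not surjective: `lim¹` of the tower of groups
of locally constant functions is nonzero. -/
theorem stmt_13 (p : ℕ) (hp : p.Prime) :
    ¬ Function.Surjective
      (fun (b : ∀ n : ℕ, LocallyConstant (Vi (n + 1)) (ZMod p)) (n : ℕ) =>
        b n - resHom p (Vi_mono (Nat.le_add_left 1 n) (Nat.le_succ (n + 1))) (b (n + 1))) := by
  have : Fact p.Prime := ⟨hp⟩
  exact stmt_13_general (ZMod p)
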